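/- Let P denote the set of preconditioned initial values. Then for every u₀ in the closure of P (in H) there exists an Obstacle Gradient Flow starting at u₀. -/

import Mathlib

open MeasureTheory Set Filter

noncomputable section

local notation "⟪" x ", " y "⟫" => @inner ℝ _ _ x y

variable {H : Type*} [NormedAddCommGroup H] [InnerProductSpace ℝ H] [CompleteSpace H]

/-- Assumption 1: `E` is Fréchet differentiable with (Riesz) gradient `E'`, the gradient is
locally Lipschitz, `E` is sequentially weakly lower semicontinuous, bounded below by `α`,
and the gradient is bounded on balls. -/
structure Assumption1 (E : H → ℝ) (E' : H → H) (α : ℝ) : Prop where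
  grad : ∀ u : H, HasGradientAt E (E' u) u
  locLip : LocallyLipschitz E'
  wlsc : ∀ (x : ℕ → H) (y : H),
    (∀ φ : H, Tendsto (fun n => ⟪x n, φ⟫) atTop (nhds ⟪y, φ⟫)) →
    E y ≤ Filter.liminf (fun n => E (x n)) atTop
  lowerBound : ∀ u : H, α ≤ E u
  gradBdd : ∀ R : ℝ, 0 < R → ∃ M : ℝ, ∀ w : H, ‖w‖ ≤ R → ‖E' w‖ ≤ M

/-- An Obstacle Gradient Flow `u` (with a.e. derivative `u'`) with initial datum `u₀ ∈ C`. -/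
structure IsOGF (C : Set H) (E' : H → H) (u u' : ℝ → H) (u₀ : H) : Prop where
  init : u 0 = u₀
  mem : ∀ t : ℝ, 0 ≤ t → u t ∈ C
  derivAe : ∀ᵐ t ∂(volume.restrict (Ioi (0:ℝ))), HasDerivAt u (u' t) t
  sqInt : ∀ T : ℝ, 0 < T → IntegrableOn (fun t => ‖u' t‖ ^ 2) (Ioc 0 T)
  ftc : ∀ s t : ℝ, 0 ≤ s → s ≤ t → u t - u s = ∫ r in s..t, u' r
  fvi : ∀ᵐ t ∂(volume.restrict (Ioi (0:ℝ))),
    ∀ v ∈ C, 0 ≤ ⟪u' t, v - u t⟫ + ⟪E' (u t), v - u t⟫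

/-- Assumption 2: a gradient growth condition with a nondecreasing continuous modulus `ζ`. -/
structure Assumption2 (E' : H → H) (ζ : ℝ → ℝ) : Prop where
  mono : MonotoneOn ζ (Ici 0)
  cont : ContinuousOn ζ (Ici 0)
  nonneg : ∀ r : ℝ, 0 ≤ r → 0 ≤ ζ r
  bound : ∀ u v : H, ‖E' u - E' v‖ ≤ ζ (‖u‖ + ‖v‖) * ‖u - v‖

/-- A minimizing movement sequence with stepwidth `τ` starting at `u₀ ∈ C`. -/
def IsMinMovSeq (E : H → ℝ) (C : Set H) (τ : ℝ) (us : ℕ → H) (u₀ : H) : Prop :=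
  us 0 = u₀ ∧ ∀ k : ℕ, us (k + 1) ∈ C ∧
    ∀ z ∈ C, ‖us (k + 1) - us k‖ ^ 2 / (2 * τ) + E (us (k + 1)) ≤
      ‖z - us k‖ ^ 2 / (2 * τ) + E z

/-- The set `P` of preconditioned initial values: those `w ∈ C` admitting a family of
minimizing movement sequences whose discrete trajectories up to each time `T` are
precompact in `H`. -/
def preconditioned (E : H → ℝ) (C : Set H) : Set H :=
  {w : H | w ∈ C ∧ ∃ us : ℝ → ℕ → H,
    (∀ τ ∈ Ioo (0:ℝ) 1, IsMinMovSeq E C τ (us τ) w) ∧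
    ∀ T : ℝ, 0 < T →
      IsCompact (closure {x : H | ∃ τ ∈ Ioo (0:ℝ) 1, ∃ k : ℕ, (k : ℝ) * τ ≤ T ∧ x = us τ k})}

/-!
The flow is the limit of projected Euler schemes `x (k + 1) = P_C (x k - τ • ∇E (x k))`. Since `P_C`
is nonexpansive and fixes every `v ∈ C`,
`‖x (k + 1) - v‖² ≤ ‖x k - v‖² + 2 τ ⟪∇E (x k), v - x k⟫ + τ² ‖∇E (x k)‖²`.
Taking for `v` the points of a scheme with a smaller step, and conversely, a discrete Grönwall
argument shows that the interpolants converge as the step is halved. Summed over many steps, the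
same inequality survives in the limit as an integrated form of the flow variational inequality, and
the latter is recovered by differentiating `‖u - v‖²`. Convergence requires that the schemes stay in
a bounded set up to each time `T`, which follows from the decay of `E` along them. The limit curve
is locally Lipschitz, hence differentiable almost everywhere: weak limits of its difference
quotients in `L²` provide a density whose integral is the curve.
-/

open scoped Topology NNReal

/-! ### Lipschitz curves in Hilbert spaces -/

section BanachCurves

variable {W : Type*} [NormedAddCommGroup W] [NormedSpace ℝ W]

theorem norm_inv_smul_sub_le_of_lipschitzWith {f : ℝ → W} {K : ℝ≥0} (hf : LipschitzWith K f)
    (h r : ℝ) : ‖h⁻¹ • (f (r + h) - f r)‖ ≤ K := by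
  have hfr : ‖f (r + h) - f r‖ ≤ K * |h| := by simpa using hf.norm_sub_le (r + h) r
  rw [norm_smul, norm_inv, Real.norm_eq_abs, inv_mul_eq_div]
  exact div_le_of_le_mul₀ (abs_nonneg h) K.2 hfr

theorem tendsto_integral_inv_smul_sub [CompleteSpace W] {f : ℝ → W} (hf : Continuous f)
    (s t : ℝ) :
    Tendsto (fun h => ∫ r in s..t, h⁻¹ • (f (r + h) - f r)) (𝓝[≠] 0) (𝓝 (f t - f s)) := by
  have hint (a b : ℝ) : IntervalIntegrable f volume a b := hf.intervalIntegrable a b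
  have hderiv (a : ℝ) : HasDerivAt (fun b => ∫ r in 0..b, f r) (f a) a :=
    (hf.integral_hasStrictDerivAt 0 a).hasDerivAt
  refine ((hderiv t).tendsto_slope_zero.sub (hderiv s).tendsto_slope_zero).congr fun h => ?_
  rw [intervalIntegral.integral_smul, intervalIntegral.integral_sub
    (Continuous.intervalIntegrable (by fun_prop) s t) (hint s t),
    intervalIntegral.integral_comp_add_right, ← smul_sub,
    intervalIntegral.integral_interval_sub_left (hint _ _) (hint _ _),
    intervalIntegral.integral_interval_sub_left (hint _ _) (hint _ _),
    intervalIntegral.integral_interval_sub_interval_comm' (hint _ _) (hint _ _) (hint _ _)]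

theorem integrableOn_norm_deriv_sq_of_lipschitzOnWith [CompleteSpace W] {f : ℝ → W} {K : ℝ≥0}
    {a b : ℝ} (hf : LipschitzOnWith K f (Icc a b)) :
    IntegrableOn (fun t => ‖deriv f t‖ ^ 2) (Ioc a b) := by
  rw [integrableOn_Ioc_iff_integrableOn_Ioo]
  refine Measure.integrableOn_of_bounded measure_Ioo_lt_top.ne
    ((stronglyMeasurable_deriv f).norm.pow 2).aestronglyMeasurable (M := K ^ 2) ?_
  filter_upwards [ae_restrict_mem measurableSet_Ioo] with t ht
  rw [norm_pow, norm_norm]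
  gcongr
  exact norm_deriv_le_of_lipschitzOn (Icc_mem_nhds ht.1 ht.2) hf

end BanachCurves

section Hilbert

variable {V : Type*} [NormedAddCommGroup V] [InnerProductSpace ℝ V]

section LipschitzCurves

variable [CompleteSpace V]

-- Limits along ultrafilters give weak compactness of balls without separability of `V`.
theorem exists_tendsto_inner_of_norm_le {ι : Type*} (l : Ultrafilter ι) {x : ι → V} {K : ℝ}
    (hx : ∀ i, ‖x i‖ ≤ K) :
    ∃ g : V, ∀ φ : V, Tendsto (fun i => ⟪x i, φ⟫) l (𝓝 ⟪g, φ⟫) := by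
  let y : ι → WeakDual ℝ V := fun i => StrongDual.toWeakDual (InnerProductSpace.toDual ℝ V (x i))
  obtain ⟨z, -, hz⟩ := (WeakDual.isCompact_closedBall (𝕜 := ℝ) (E := V) 0 K).ultrafilter_le_nhds
    (l.map y) (le_principal_iff.2 (mem_map.2 (univ_mem' fun i => by simp [y, hx i])))
  refine ⟨(InnerProductSpace.toDual ℝ V).symm (WeakDual.toStrongDual z), fun φ => ?_⟩
  rw [InnerProductSpace.toDual_symm_apply]
  exact ((WeakDual.eval_continuous (𝕜 := ℝ) (E := V) φ).tendsto z).comp hz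

theorem exists_tendsto_inner_setIntegral_of_norm_le {Ω ι : Type*} [MeasurableSpace Ω]
    (μ : Measure Ω) [IsFiniteMeasure μ] (l : Ultrafilter ι) {q : ι → Ω → V} {K : ℝ≥0}
    (hq : ∀ i, AEStronglyMeasurable (q i) μ) (hqK : ∀ i ω, ‖q i ω‖ ≤ K) :
    ∃ g : Ω → V, Integrable g μ ∧ ∀ A, MeasurableSet A → ∀ φ : V,
      Tendsto (fun i => ⟪∫ ω in A, q i ω ∂μ, φ⟫) l (𝓝 ⟪∫ ω in A, g ω ∂μ, φ⟫) := by
  have hmem (i : ι) : MemLp (q i) 2 μ := MemLp.of_bound (hq i) K (.of_forall (hqK i))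
  obtain ⟨G, hG⟩ := exists_tendsto_inner_of_norm_le l (x := fun i => (hmem i).toLp (q i))
    fun i => Lp.norm_le_of_ae_bound K.2 <| by
      filter_upwards [(hmem i).coeFn_toLp] with ω hω
      exact hω ▸ hqK i ω
  refine ⟨G, (Lp.memLp G).integrable one_le_two, fun A hA φ => ?_⟩
  have inner_indicator (w : Lp V 2 μ) :
      ⟪w, indicatorConstLp 2 hA (measure_ne_top μ A) φ⟫ = ⟪∫ ω in A, w ω ∂μ, φ⟫ := by
    rw [real_inner_comm, L2.inner_indicatorConstLp_eq_inner_setIntegral, real_inner_comm]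
  have hlim := hG (indicatorConstLp 2 hA (measure_ne_top μ A) φ)
  simp only [inner_indicator] at hlim
  refine hlim.congr fun i => ?_
  rw [integral_congr_ae (ae_restrict_of_ae (hmem i).coeFn_toLp)]

theorem exists_integral_eq_sub_of_lipschitzWith {f : ℝ → V} {K : ℝ≥0} (hf : LipschitzWith K f)
    (a b : ℝ) : ∃ g : ℝ → V, IntegrableOn g (Ioc a b) ∧
      ∀ s t, a ≤ s → s ≤ t → t ≤ b → ∫ r in s..t, g r = f t - f s := by
  let l : Ultrafilter ℝ := Ultrafilter.of (𝓝[≠] 0)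
  obtain ⟨g, hg, hlim⟩ := exists_tendsto_inner_setIntegral_of_norm_le
    (volume.restrict (Ioc a b)) l (q := fun h r => h⁻¹ • (f (r + h) - f r))
    (fun h => (by have := hf.continuous; fun_prop : Continuous _).aestronglyMeasurable)
    (norm_inv_smul_sub_le_of_lipschitzWith hf)
  refine ⟨g, hg, fun s t has hst htb => ext_inner_right ℝ fun φ => ?_⟩
  have hlim_st := hlim (Ioc s t) measurableSet_Ioc φ
  simp only [Measure.restrict_restrict measurableSet_Ioc,
    inter_eq_left.2 (Ioc_subset_Ioc has htb), ← intervalIntegral.integral_of_le hst] at hlim_st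
  exact tendsto_nhds_unique hlim_st <|
    ((tendsto_integral_inv_smul_sub hf.continuous s t).mono_left (Ultrafilter.of_le _)).inner
      tendsto_const_nhds

theorem exists_ae_hasDerivAt_of_lipschitzOnWith {f : ℝ → V} {K : ℝ≥0} {a b : ℝ} (hab : a ≤ b)
    (hf : LipschitzOnWith K f (Icc a b)) :
    ∃ g : ℝ → V, (∀ᵐ t, t ∈ Ioo a b → HasDerivAt f (g t) t) ∧ ∫ r in a..b, g r = f b - f a := by
  obtain ⟨g, hg, hgf⟩ := exists_integral_eq_sub_of_lipschitzWith
    (hf.to_restrict.comp (LipschitzWith.projIcc hab)) a b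
  have hint {t : ℝ} (ht : t ∈ Icc a b) : ∫ r in a..t, g r = f t - f a := by
    simpa [projIcc_of_mem hab ht] using hgf a t le_rfl ht.1 ht.2
  refine ⟨g, ?_, hint (right_mem_Icc.2 hab)⟩
  filter_upwards [((intervalIntegrable_iff_integrableOn_Ioc_of_le hab).2 hg).ae_hasDerivAt_integral]
    with t hderiv ht
  have hat := hderiv (Ioo_subset_Icc_self.trans Icc_subset_uIcc ht) a left_mem_uIcc
  refine (hat.add_const (f a)).congr_of_eventuallyEq ?_
  filter_upwards [Icc_mem_nhds ht.1 ht.2] with r hr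
  rw [hint hr, sub_add_cancel]

theorem ae_differentiableAt_of_lipschitzOnWith {f : ℝ → V} {K : ℝ≥0} {a b : ℝ}
    (hf : LipschitzOnWith K f (Icc a b)) : ∀ᵐ t, t ∈ Ioo a b → DifferentiableAt ℝ f t := by
  rcases le_total a b with hab | hba
  · obtain ⟨g, hg, -⟩ := exists_ae_hasDerivAt_of_lipschitzOnWith hab hf
    exact hg.mono fun t ht hmem => (ht hmem).differentiableAt
  · simp [Ioo_eq_empty hba.not_gt]

theorem integral_deriv_eq_sub_of_lipschitzOnWith {f : ℝ → V} {K : ℝ≥0} {a b : ℝ} (hab : a ≤ b)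
    (hf : LipschitzOnWith K f (Icc a b)) : ∫ r in a..b, deriv f r = f b - f a := by
  obtain ⟨g, hg, hint⟩ := exists_ae_hasDerivAt_of_lipschitzOnWith hab hf
  rw [← hint, intervalIntegral.integral_of_le hab, intervalIntegral.integral_of_le hab,
    integral_Ioc_eq_integral_Ioo, integral_Ioc_eq_integral_Ioo]
  exact setIntegral_congr_ae measurableSet_Ioo (hg.mono fun t ht hmem => (ht hmem).deriv)

end LipschitzCurves

/-! ### Projected Euler schemes -/

/-- Projected Euler scheme of step `τ` for `u̇ = -F u` constrained to `C`: `x (k + 1)` is the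
metric projection of `x k - τ • F (x k)` onto `C`. The projection is encoded by the variational
inequality that characterizes it when `C` is convex. -/
structure IsProjEuler (F : V → V) (C : Set V) (τ : ℝ) (x : ℕ → V) : Prop where
  mem : ∀ k, x k ∈ C
  inner_le_zero : ∀ k, ∀ v ∈ C, ⟪x k - τ • F (x k) - x (k + 1), v - x (k + 1)⟫ ≤ 0

theorem exists_isProjEuler [CompleteSpace V] (F : V → V) {C : Set V} (hCcl : IsClosed C)
    (hCcv : Convex ℝ C) (τ : ℝ) {u₀ : V} (hu₀ : u₀ ∈ C) :
    ∃ x : ℕ → V, IsProjEuler F C τ x ∧ x 0 = u₀ := by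
  have hproj (w : V) : ∃ y ∈ C, ∀ v ∈ C, ⟪w - y, v - y⟫ ≤ 0 := by
    obtain ⟨y, hy, hmin⟩ :=
      exists_norm_eq_iInf_of_complete_convex ⟨u₀, hu₀⟩ hCcl.isComplete hCcv w
    exact ⟨y, hy, (norm_eq_iInf_iff_real_inner_le_zero hCcv hy).1 hmin⟩
  choose P hPmem hPinner using hproj
  let x : ℕ → V := Nat.rec u₀ fun _ y => P (y - τ • F y)
  exact ⟨x, ⟨Nat.rec hu₀ fun _ _ => hPmem _, fun _ => hPinner _⟩, rfl⟩

theorem inner_le_inner_add_of_lipschitzOnWith {F : V → V} {B : Set V} {L : ℝ≥0}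
    (hL : LipschitzOnWith L F B) {y z v : V} (hy : y ∈ B) (hz : z ∈ B) {M D d : ℝ}
    (hM : ‖F y‖ ≤ M) (hD : ‖v - z‖ ≤ D) (hd : ‖z - y‖ ≤ d) :
    ⟪F z, v - z⟫ ≤ ⟪F y, v - y⟫ + (L * D + M) * d := by
  have hd0 : 0 ≤ d := (norm_nonneg _).trans hd
  have hdiff : ⟪F z - F y, v - z⟫ ≤ L * d * D :=
    (real_inner_le_norm _ _).trans <| by
      gcongr
      exact (hL.norm_sub_le hz hy).trans (by gcongr)
  have hdrift : ⟪F y, y - z⟫ ≤ M * d :=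
    (real_inner_le_norm _ _).trans <| by
      rw [norm_sub_rev]
      gcongr
      exact (norm_nonneg _).trans hM
  calc ⟪F z, v - z⟫ = ⟪F y, v - y⟫ + ⟪F z - F y, v - z⟫ + ⟪F y, y - z⟫ := by
        simp only [inner_sub_left, inner_sub_right]; ring
    _ ≤ ⟪F y, v - y⟫ + (L * D + M) * d := by linarith

theorem inner_add_inner_le_of_lipschitzOnWith {F : V → V} {B : Set V} {L : ℝ≥0}
    (hL : LipschitzOnWith L F B) {y v w : V} (hy : y ∈ B) (hv : v ∈ B) {M d : ℝ}
    (hM : ‖F v‖ ≤ M) (hd : ‖w - y‖ ≤ d) :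
    ⟪F y, v - y⟫ + ⟪F v, w - v⟫ ≤ L * ‖y - v‖ ^ 2 + M * d :=
  calc ⟪F y, v - y⟫ + ⟪F v, w - v⟫ = ⟪F y - F v, v - y⟫ + ⟪F v, w - y⟫ := by
        simp only [inner_sub_left, inner_sub_right]; ring
    _ ≤ ‖F y - F v‖ * ‖v - y‖ + ‖F v‖ * ‖w - y‖ := by
      gcongr <;> exact real_inner_le_norm _ _
    _ ≤ L * ‖y - v‖ * ‖y - v‖ + M * d := by
      rw [norm_sub_rev v]
      gcongr
      · exact hL.norm_sub_le hy hv
      · exact (norm_nonneg _).trans hM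
    _ = L * ‖y - v‖ ^ 2 + M * d := by ring

namespace IsProjEuler

variable {F : V → V} {C : Set V} {τ : ℝ} {x : ℕ → V}

theorem norm_succ_sub_sq_le (hx : IsProjEuler F C τ x) (k : ℕ) {v : V} (hv : v ∈ C) :
    ‖x (k + 1) - v‖ ^ 2 ≤ ‖x k - v‖ ^ 2 + 2 * τ * ⟪F (x k), v - x k⟫ + τ ^ 2 * ‖F (x k)‖ ^ 2 := by
  set w := x k - τ • F (x k) with hw
  calc ‖x (k + 1) - v‖ ^ 2 = ‖v - x (k + 1)‖ ^ 2 := by rw [norm_sub_rev]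
    _ ≤ ‖(w - x (k + 1)) - (v - x (k + 1))‖ ^ 2 := by
      rw [norm_sub_sq_real (w - x (k + 1))]
      linarith [hx.inner_le_zero k v hv, sq_nonneg ‖w - x (k + 1)‖]
    _ = ‖(x k - v) - τ • F (x k)‖ ^ 2 := by congr 2; rw [hw]; abel
    _ = ‖x k - v‖ ^ 2 + 2 * τ * ⟪F (x k), v - x k⟫ + τ ^ 2 * ‖F (x k)‖ ^ 2 := by
      rw [norm_sub_sq_real, real_inner_smul_right, norm_smul, mul_pow, Real.norm_eq_abs, sq_abs,
        real_inner_comm, ← neg_sub v, inner_neg_right, norm_neg]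
      ring

theorem norm_succ_sub_sq_le_inner (hx : IsProjEuler F C τ x) (k : ℕ) :
    ‖x (k + 1) - x k‖ ^ 2 ≤ -(τ * ⟪F (x k), x (k + 1) - x k⟫) := by
  have h := hx.inner_le_zero k (x k) (hx.mem k)
  rw [sub_right_comm, inner_sub_left, real_inner_self_eq_norm_sq, real_inner_smul_left,
    norm_sub_rev, ← neg_sub (x (k + 1)), inner_neg_right] at h
  linarith

theorem norm_succ_sub_le (hx : IsProjEuler F C τ x) (hτ : 0 ≤ τ) (k : ℕ) :
    ‖x (k + 1) - x k‖ ≤ τ * ‖F (x k)‖ := by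
  have hcs : |⟪F (x k), x (k + 1) - x k⟫| ≤ ‖F (x k)‖ * ‖x (k + 1) - x k‖ :=
    abs_real_inner_le_norm _ _
  have hsq : ‖x (k + 1) - x k‖ * ‖x (k + 1) - x k‖ ≤ τ * ‖F (x k)‖ * ‖x (k + 1) - x k‖ := by
    nlinarith [hx.norm_succ_sub_sq_le_inner k, (abs_le.1 hcs).1]
  rcases (norm_nonneg (x (k + 1) - x k)).eq_or_lt with hzero | hpos
  · rw [← hzero]; positivity
  · exact le_of_mul_le_mul_right hsq hpos

theorem norm_add_sub_le (hx : IsProjEuler F C τ x) (hτ : 0 ≤ τ) {M : ℝ} {k p : ℕ}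
    (hM : ∀ i < p, ‖F (x (k + i))‖ ≤ M) : ‖x (k + p) - x k‖ ≤ p * τ * M := by
  induction p with
  | zero => simp
  | succ p ih =>
    calc ‖x (k + (p + 1)) - x k‖
        ≤ ‖x (k + p + 1) - x (k + p)‖ + ‖x (k + p) - x k‖ := norm_sub_le_norm_sub_add_norm_sub ..
      _ ≤ τ * M + p * τ * M := by
        gcongr
        · exact (hx.norm_succ_sub_le hτ _).trans (by gcongr; exact hM p p.lt_succ_self)
        · exact ih fun i hi => hM i (hi.trans p.lt_succ_self)
      _ = (p + 1 : ℕ) * τ * M := by push_cast; ring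

theorem norm_add_sub_sq_le (hx : IsProjEuler F C τ x) (hτ : 0 ≤ τ) {B : Set V} {L : ℝ≥0}
    {M D : ℝ} (hL : LipschitzOnWith L F B) (hM : ∀ y ∈ B, ‖F y‖ ≤ M) {k p : ℕ}
    (hB : ∀ i ≤ p, x (k + i) ∈ B) {v : V} (hv : v ∈ C) (hD : ∀ y ∈ B, ‖v - y‖ ≤ D) :
    ‖x (k + p) - v‖ ^ 2 ≤
      ‖x k - v‖ ^ 2 + 2 * (p * τ) * ⟪F (x k), v - x k⟫ + (L * D + M) * M * (p * τ) ^ 2 := by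
  have hk : x k ∈ B := hB 0 p.zero_le
  have hM0 : 0 ≤ M := (norm_nonneg _).trans (hM _ hk)
  have hD0 : 0 ≤ D := (norm_nonneg _).trans (hD _ hk)
  induction p with
  | zero => simp
  | succ p ih =>
    have hp : x (k + p) ∈ B := hB p p.le_succ
    set G := ⟪F (x k), v - x k⟫
    have hdisp : ‖x (k + p) - x k‖ ≤ p * τ * M :=
      hx.norm_add_sub_le hτ fun i hi => hM _ (hB i (by lia))
    calc ‖x (k + p + 1) - v‖ ^ 2
        ≤ ‖x (k + p) - v‖ ^ 2 + 2 * τ * ⟪F (x (k + p)), v - x (k + p)⟫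
            + τ ^ 2 * ‖F (x (k + p))‖ ^ 2 := hx.norm_succ_sub_sq_le (k + p) hv
      _ ≤ (‖x k - v‖ ^ 2 + 2 * (p * τ) * G + (L * D + M) * M * (p * τ) ^ 2)
            + 2 * τ * (G + (L * D + M) * (p * τ * M)) + τ ^ 2 * M ^ 2 := by
        gcongr
        · exact ih fun i hi => hB i (by lia)
        · exact inner_le_inner_add_of_lipschitzOnWith hL hk hp (hM _ hk) (hD _ hp) hdisp
        · exact hM _ hp
      _ = ‖x k - v‖ ^ 2 + 2 * ((p + 1 : ℕ) * τ) * G + (L * D + M) * M * ((p + 1 : ℕ) * τ) ^ 2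
            - L * D * M * τ ^ 2 := by push_cast; ring
      _ ≤ _ := sub_le_self _ (by positivity)

end IsProjEuler

/-! ### Comparison of two step sizes -/

theorem le_mul_exp_of_le_one_add_mul_add {d : ℕ → ℝ} {b c : ℝ} {n : ℕ} (hb : 0 ≤ b) (hc : 0 ≤ c)
    (hd0 : d 0 ≤ 0) (hd : ∀ k < n, d (k + 1) ≤ (1 + c) * d k + b) :
    d n ≤ n * b * Real.exp (n * c) := by
  have hpow (k : ℕ) (hk : k ≤ n) : d k ≤ k * b * (1 + c) ^ k := by
    induction k with
    | zero => simpa using hd0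
    | succ k ih =>
      calc d (k + 1) ≤ (1 + c) * d k + b := hd k hk
        _ ≤ (1 + c) * (k * b * (1 + c) ^ k) + b * (1 + c) ^ (k + 1) := by
          gcongr
          · exact ih (by lia)
          · exact le_mul_of_one_le_right hb (one_le_pow₀ (by linarith))
        _ = (k + 1 : ℕ) * b * (1 + c) ^ (k + 1) := by push_cast; ring
  calc d n ≤ n * b * (1 + c) ^ n := hpow n le_rfl
    _ ≤ n * b * Real.exp c ^ n := by
      gcongr
      rw [add_comm]
      exact Real.add_one_le_exp c
    _ = n * b * Real.exp (n * c) := by rw [Real.exp_nat_mul]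

namespace IsProjEuler

variable {F : V → V} {C : Set V} {τ : ℝ} {x y : ℕ → V} {N : ℕ} {B : Set V} {L : ℝ≥0} {M D : ℝ}

theorem norm_sub_sq_succ_le_of_refinement (hx : IsProjEuler F C (N * τ) x)
    (hy : IsProjEuler F C τ y) (hτ : 0 ≤ τ) (hL : LipschitzOnWith L F B)
    (hM : ∀ z ∈ B, ‖F z‖ ≤ M) (hD : ∀ z ∈ B, ∀ w ∈ B, ‖z - w‖ ≤ D) {k : ℕ}
    (hxB : ∀ i ≤ k + 1, x i ∈ B) (hyB : ∀ i ≤ (k + 1) * N, y i ∈ B) :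
    ‖x (k + 1) - y ((k + 1) * N)‖ ^ 2 ≤ (1 + 2 * L * (N * τ)) * ‖x k - y (k * N)‖ ^ 2 +
      2 * ((L * D + 2 * M) * M) * (N * τ) ^ 2 := by
  set v := y (k * N)
  set w := x (k + 1)
  set K := (L * D + M) * M
  have hxk : x k ∈ B := hxB k k.le_succ
  have hw : w ∈ B := hxB _ le_rfl
  have hv : v ∈ B := hyB _ (by gcongr; lia)
  have hxstep : ‖w - v‖ ^ 2 ≤
      ‖x k - v‖ ^ 2 + 2 * (N * τ) * ⟪F (x k), v - x k⟫ + K * (N * τ) ^ 2 := by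
    simpa using hx.norm_add_sub_sq_le (p := 1) (by positivity) hL hM
      (fun i hi => hxB _ (by lia)) (hy.mem _) (hD v hv)
  have hystep : ‖w - y ((k + 1) * N)‖ ^ 2 ≤
      ‖w - v‖ ^ 2 + 2 * (N * τ) * ⟪F v, w - v⟫ + K * (N * τ) ^ 2 := by
    rw [add_one_mul, norm_sub_rev, norm_sub_rev w]
    exact hy.norm_add_sub_sq_le hτ hL hM (fun i hi => hyB _ (by rw [add_one_mul]; lia))
      (hx.mem _) (hD w hw)
  have hinner : ⟪F (x k), v - x k⟫ + ⟪F v, w - v⟫ ≤ L * ‖x k - v‖ ^ 2 + M * (N * τ * M) :=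
    inner_add_inner_le_of_lipschitzOnWith hL hxk hv (hM v hv) <|
      (hx.norm_succ_sub_le (by positivity) k).trans (by gcongr; exact hM _ hxk)
  linarith [mul_le_mul_of_nonneg_left hinner (by positivity : 0 ≤ 2 * (N * τ))]

theorem norm_sub_sq_le_of_refinement (hx : IsProjEuler F C (N * τ) x)
    (hy : IsProjEuler F C τ y) (hxy : x 0 = y 0) (hτ : 0 ≤ τ) (hL : LipschitzOnWith L F B)
    (hM : ∀ z ∈ B, ‖F z‖ ≤ M) (hD : ∀ z ∈ B, ∀ w ∈ B, ‖z - w‖ ≤ D) {n : ℕ} {T : ℝ}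
    (hnT : n * (N * τ) ≤ T) (hxB : ∀ i ≤ n, x i ∈ B) (hyB : ∀ i ≤ n * N, y i ∈ B) :
    ‖x n - y (n * N)‖ ^ 2 ≤
      T * (2 * ((L * D + 2 * M) * M) * (N * τ)) * Real.exp (2 * L * T) := by
  have hM0 : 0 ≤ M := (norm_nonneg _).trans (hM _ (hxB 0 n.zero_le))
  have hD0 : 0 ≤ D := (norm_nonneg _).trans (hD _ (hxB 0 n.zero_le) _ (hxB 0 n.zero_le))
  have hT0 : 0 ≤ T := le_trans (by positivity) hnT
  calc ‖x n - y (n * N)‖ ^ 2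
      ≤ n * (2 * ((L * D + 2 * M) * M) * (N * τ) ^ 2) * Real.exp (n * (2 * L * (N * τ))) :=
        le_mul_exp_of_le_one_add_mul_add (d := fun k => ‖x k - y (k * N)‖ ^ 2) (by positivity)
          (by positivity) (by simp [hxy]) fun k hk =>
            hx.norm_sub_sq_succ_le_of_refinement hy hτ hL hM hD (fun i hi => hxB i (by lia))
              fun i hi => hyB i (hi.trans (by gcongr; lia))
    _ = (n * (N * τ)) * (2 * ((L * D + 2 * M) * M) * (N * τ))
          * Real.exp (2 * L * (n * (N * τ))) := by ring_nf
    _ ≤ T * (2 * ((L * D + 2 * M) * M) * (N * τ)) * Real.exp (2 * L * T) := by gcongr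

end IsProjEuler

/-! ### Energy bound -/

section Energy

variable [CompleteSpace V] {E : V → ℝ} {E' : V → V} {B C : Set V} {L : ℝ≥0} {τ : ℝ} {x : ℕ → V}

theorem le_add_inner_add_of_lipschitzOnWith_gradient (hgrad : ∀ u ∈ B, HasGradientAt E (E' u) u)
    (hL : LipschitzOnWith L E' B) (hB : Convex ℝ B) {y z : V} (hy : y ∈ B) (hz : z ∈ B) :
    E z ≤ E y + ⟪E' y, z - y⟫ + L * ‖z - y‖ ^ 2 := by
  have hseg : segment ℝ y z ⊆ B := hB.segment_subset hy hz
  have hmvt := (convex_segment y z).norm_image_sub_le_of_norm_hasFDerivWithin_le'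
    (φ := InnerProductSpace.toDual ℝ V (E' y)) (C := L * ‖z - y‖)
    (fun u hu => (hgrad u (hseg hu)).hasFDerivAt.hasFDerivWithinAt)
    (fun u hu => by
      rw [← map_sub, LinearIsometryEquiv.norm_map]
      refine (hL.norm_sub_le (hseg hu) hy).trans ?_
      gcongr
      exact norm_sub_le_of_mem_segment hu)
    (left_mem_segment ℝ y z) (right_mem_segment ℝ y z)
  rw [InnerProductSpace.toDual_apply_apply] at hmvt
  linarith [le_of_abs_le hmvt]

namespace IsProjEuler

theorem energy_succ_add_le (hx : IsProjEuler E' C τ x) (hgrad : ∀ u ∈ B, HasGradientAt E (E' u) u)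
    (hL : LipschitzOnWith L E' B) (hB : Convex ℝ B) (hτ : 0 < τ) (hτL : 2 * L * τ ≤ 1) {k : ℕ}
    (hk : x k ∈ B) (hk' : x (k + 1) ∈ B) :
    E (x (k + 1)) + ‖x (k + 1) - x k‖ ^ 2 / (2 * τ) ≤ E (x k) := by
  have hdescent := le_add_inner_add_of_lipschitzOnWith_gradient hgrad hL hB hk hk'
  have hproj := hx.norm_succ_sub_sq_le_inner k
  set δ := ‖x (k + 1) - x k‖ ^ 2
  have hquad : L * δ ≤ δ / (2 * τ) := by
    rw [le_div_iff₀ (by positivity)]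
    linarith [mul_le_of_le_one_right (sq_nonneg ‖x (k + 1) - x k‖) hτL]
  have hinner : ⟪E' (x k), x (k + 1) - x k⟫ ≤ -(2 * (δ / (2 * τ))) := by
    rw [← mul_div_assoc, mul_div_mul_left _ _ two_ne_zero, le_neg, div_le_iff₀ hτ]
    linarith
  linarith

theorem norm_sub_zero_le_energy (hx : IsProjEuler E' C τ x)
    (hgrad : ∀ u ∈ B, HasGradientAt E (E' u) u) (hL : LipschitzOnWith L E' B) (hB : Convex ℝ B)
    (hτ : 0 < τ) (hτL : 2 * L * τ ≤ 1) {k : ℕ} (hxB : ∀ i ≤ k, x i ∈ B) :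
    ‖x k - x 0‖ ≤ k * τ / 2 + E (x 0) - E (x k) := by
  induction k with
  | zero => simp
  | succ k ih =>
    set δ := ‖x (k + 1) - x k‖
    have hamgm : δ ≤ τ / 2 + δ ^ 2 / (2 * τ) := by
      have : τ / 2 + δ ^ 2 / (2 * τ) - δ = (τ - δ) ^ 2 / (2 * τ) := by field
      linarith [(by positivity : 0 ≤ (τ - δ) ^ 2 / (2 * τ))]
    have henergy :=
      hx.energy_succ_add_le hgrad hL hB hτ hτL (hxB k k.le_succ) (hxB _ le_rfl)
    calc ‖x (k + 1) - x 0‖ ≤ δ + ‖x k - x 0‖ := norm_sub_le_norm_sub_add_norm_sub ..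
      _ ≤ (τ / 2 + δ ^ 2 / (2 * τ)) + (k * τ / 2 + E (x 0) - E (x k)) :=
        add_le_add hamgm (ih fun i hi => hxB i (by lia))
      _ ≤ (k + 1 : ℕ) * τ / 2 + E (x 0) - E (x (k + 1)) := by push_cast; linarith

-- The unit gap between the two radii leaves room for one more step, of length `≤ τ * M ≤ 1`.
theorem mem_closedBall_of_energy_bound (hx : IsProjEuler E' C τ x)
    (hgrad : ∀ u, HasGradientAt E (E' u) u) {α : ℝ} (hα : ∀ u, α ≤ E u) {T r M : ℝ}
    (hr : T / 2 + E (x 0) - α ≤ r) (hL : LipschitzOnWith L E' (Metric.closedBall (x 0) (r + 1)))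
    (hM : ∀ u ∈ Metric.closedBall (x 0) r, ‖E' u‖ ≤ M) (hτ : 0 < τ) (hτL : 2 * L * τ ≤ 1)
    (hτM : τ * M ≤ 1) (k : ℕ) (hk : k * τ ≤ T) : x k ∈ Metric.closedBall (x 0) r := by
  induction k using Nat.strong_induction_on with
  | _ k ih =>
    have hxr (i : ℕ) (hi : i < k) : x i ∈ Metric.closedBall (x 0) r :=
      ih i hi (le_trans (by gcongr) hk)
    have hxr1 (i : ℕ) (hi : i ≤ k) : x i ∈ Metric.closedBall (x 0) (r + 1) := by
      rcases i with - | i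
      · refine Metric.mem_closedBall_self ?_
        have : 0 ≤ T := le_trans (by positivity) hk
        linarith [hα (x 0)]
      · have hstep : ‖x (i + 1) - x i‖ ≤ 1 :=
          (hx.norm_succ_sub_le hτ.le i).trans
            ((mul_le_mul_of_nonneg_left (hM _ (hxr i hi)) hτ.le).trans hτM)
        exact Metric.mem_closedBall.2 <| (dist_triangle _ (x i) _).trans <| by
          linarith [dist_eq_norm (x (i + 1)) (x i), Metric.mem_closedBall.1 (hxr i hi)]
    rw [mem_closedBall_iff_norm]
    linarith [hα (x k), hx.norm_sub_zero_le_energy (fun u _ => hgrad u) hL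
      (convex_closedBall _ _) hτ hτL hxr1]

end IsProjEuler

end Energy

/-- `f` is Lipschitz on every bounded set, with a constant that may depend on the set. -/
def LipschitzOnBounded {X Y : Type*} [PseudoMetricSpace X] [PseudoMetricSpace Y] (f : X → Y) :
    Prop :=
  ∀ B : Set X, Bornology.IsBounded B → ∃ L : ℝ≥0, LipschitzOnWith L f B

theorem LipschitzOnBounded.continuous {X Y : Type*} [PseudoMetricSpace X] [PseudoMetricSpace Y]
    {f : X → Y} (hf : LipschitzOnBounded f) : Continuous f :=
  continuous_iff_continuousAt.2 fun x =>
    (hf _ Metric.isBounded_ball).choose_spec.continuousOn.continuousAt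
      (Metric.ball_mem_nhds x one_pos)

theorem LipschitzOnBounded.exists_norm_le {X Y : Type*} [PseudoMetricSpace X]
    [SeminormedAddCommGroup Y] {f : X → Y} (hf : LipschitzOnBounded f) {B : Set X}
    (hB : Bornology.IsBounded B) : ∃ M, ∀ y ∈ B, ‖f y‖ ≤ M := by
  obtain ⟨L, hL⟩ := hf B hB
  rcases B.eq_empty_or_nonempty with rfl | ⟨b, hb⟩
  · exact ⟨0, by simp⟩
  · refine ⟨‖f b‖ + L * Metric.diam B, fun y hy => ?_⟩
    calc ‖f y‖ ≤ ‖f b‖ + ‖f y - f b‖ := norm_le_norm_add_norm_sub' _ _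
      _ ≤ ‖f b‖ + L * dist y b := by
        gcongr
        rw [← dist_eq_norm]
        exact hL.dist_le_mul y hy b hb
      _ ≤ ‖f b‖ + L * Metric.diam B := by gcongr; exact Metric.dist_le_diam_of_mem hB hy hb

theorem exists_isBounded_isProjEuler_mem [CompleteSpace V] {E : V → ℝ} {E' : V → V}
    (hgrad : ∀ u, HasGradientAt E (E' u) u) (hbdd : BddBelow (range E))
    (hLip : LipschitzOnBounded E') (C : Set V) (u₀ : V) (T : ℝ) :
    ∃ B, Bornology.IsBounded B ∧ ∀ᶠ τ in 𝓝[>] (0 : ℝ), ∀ x, IsProjEuler E' C τ x → x 0 = u₀ →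
      ∀ k : ℕ, k * τ ≤ T → x k ∈ B := by
  obtain ⟨α, hα⟩ := hbdd
  set r := T / 2 + E u₀ - α
  obtain ⟨L, hL⟩ := hLip (Metric.closedBall u₀ (r + 1)) Metric.isBounded_closedBall
  obtain ⟨M, hM⟩ := hLip.exists_norm_le (Metric.isBounded_closedBall (x := u₀) (r := r))
  have hsmall (c : ℝ) : ∀ᶠ τ in 𝓝[>] (0 : ℝ), c * τ ≤ 1 := by
    have hlim : Tendsto (fun τ : ℝ => c * τ) (𝓝 0) (𝓝 0) := by
      simpa using (continuous_const_mul c).tendsto 0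
    exact nhdsWithin_le_nhds (hlim.eventually_le_const one_pos)
  refine ⟨Metric.closedBall u₀ r, Metric.isBounded_closedBall, ?_⟩
  filter_upwards [hsmall (2 * L), hsmall M, self_mem_nhdsWithin] with τ hτL hτM hτ
  rintro x hx rfl
  exact hx.mem_closedBall_of_energy_bound hgrad (fun u => hα (mem_range_self u)) le_rfl hL hM hτ
    hτL (by rwa [mul_comm])

/-! ### The limit curve -/

/-- Piecewise constant interpolant of the sequence `x` with step `τ`. -/
def stepInterp {X : Type*} (τ : ℝ) (x : ℕ → X) (t : ℝ) : X := x ⌊t / τ⌋₊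

theorem floor_div_mul_le {τ t : ℝ} (hτ : 0 < τ) (ht : 0 ≤ t) : ⌊t / τ⌋₊ * τ ≤ t :=
  (le_div_iff₀ hτ).1 (Nat.floor_le (by positivity))

theorem tendsto_floor_div_mul {t : ℝ} (ht : 0 ≤ t) :
    Tendsto (fun τ : ℝ => ⌊t / τ⌋₊ * τ) (𝓝[>] 0) (𝓝 t) := by
  simpa [Function.comp_def, div_eq_mul_inv] using
    (tendsto_nat_floor_mul_div_atTop ht).comp tendsto_inv_nhdsGT_zero

theorem exists_floor_div_eq_add {τ s t : ℝ} (hτ : 0 < τ) (hst : s ≤ t) :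
    ∃ p : ℕ, ⌊t / τ⌋₊ = ⌊s / τ⌋₊ + p ∧ ⌊t / τ⌋₊ * τ - ⌊s / τ⌋₊ * τ = p * τ := by
  obtain ⟨p, hp⟩ := Nat.exists_eq_add_of_le (Nat.floor_mono (div_le_div_of_nonneg_right hst hτ.le))
  exact ⟨p, hp, by rw [hp]; push_cast; ring⟩

theorem forall_le_floor_div_mem {X : Type*} {x : ℕ → X} {B : Set X} {τ t T : ℝ} (hτ : 0 < τ)
    (hB : ∀ k : ℕ, k * τ ≤ T → x k ∈ B) (ht : 0 ≤ t) (htT : t ≤ T) :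
    ∀ k ≤ ⌊t / τ⌋₊, x k ∈ B := fun k hk =>
  hB k (((le_div_iff₀ hτ).1 ((Nat.le_floor_iff (by positivity)).1 hk)).trans htT)

namespace IsProjEuler

variable {F : V → V} {C B : Set V} {τ : ℝ} {x y : ℕ → V} {L : ℝ≥0} {M D T : ℝ}

theorem norm_stepInterp_sub_le_of_refinement {N : ℕ} (hN : N ≠ 0) (hx : IsProjEuler F C (N * τ) x)
    (hy : IsProjEuler F C τ y) (hxy : x 0 = y 0) (hτ : 0 < τ) (hL : LipschitzOnWith L F B)
    (hM : ∀ z ∈ B, ‖F z‖ ≤ M) (hD : ∀ z ∈ B, ∀ w ∈ B, ‖z - w‖ ≤ D)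
    (hxB : ∀ k : ℕ, k * (N * τ) ≤ T → x k ∈ B) (hyB : ∀ k : ℕ, k * τ ≤ T → y k ∈ B)
    {t : ℝ} (ht : 0 ≤ t) (htT : t ≤ T) :
    ‖stepInterp (N * τ) x t - stepInterp τ y t‖ ≤
      √(T * (2 * ((L * D + 2 * M) * M) * (N * τ)) * Real.exp (2 * L * T)) + M * (N * τ) := by
  set j := ⌊t / (N * τ)⌋₊ with hj
  set q := ⌊t / τ⌋₊
  have hqj : j * N + q % N = q := by
    rw [hj, mul_comm (N : ℝ), ← div_div, Nat.floor_div_natCast, Nat.div_add_mod']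
  have hNτ : 0 < N * τ := by positivity
  have hxj := forall_le_floor_div_mem hNτ hxB ht htT
  have hyq := forall_le_floor_div_mem hτ hyB ht htT
  have hM0 : 0 ≤ M := (norm_nonneg _).trans (hM _ (hxj 0 j.zero_le))
  have hcoarse : ‖x j - y (j * N)‖ ≤
      √(T * (2 * ((L * D + 2 * M) * M) * (N * τ)) * Real.exp (2 * L * T)) :=
    Real.le_sqrt_of_sq_le <| hx.norm_sub_sq_le_of_refinement hy hxy hτ.le hL hM hD
      ((floor_div_mul_le hNτ ht).trans htT) hxj fun i hi => hyq i (by lia)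
  have hfine : ‖y q - y (j * N)‖ ≤ M * (N * τ) :=
    calc ‖y q - y (j * N)‖ ≤ (q % N : ℕ) * τ * M := by
          conv_lhs => rw [← hqj]
          exact hy.norm_add_sub_le hτ.le fun i hi => hM _ (hyq _ (by lia))
      _ ≤ N * τ * M := by
          gcongr
          exact (Nat.mod_lt q (Nat.pos_of_ne_zero hN)).le
      _ = M * (N * τ) := mul_comm _ _
  calc ‖x j - y q‖ ≤ ‖x j - y (j * N)‖ + ‖y (j * N) - y q‖ := norm_sub_le_norm_sub_add_norm_sub ..
    _ ≤ _ := add_le_add hcoarse (norm_sub_rev (y q) _ ▸ hfine)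

theorem norm_stepInterp_sub_stepInterp_le (hx : IsProjEuler F C τ x) (hτ : 0 < τ)
    (hM : ∀ y ∈ B, ‖F y‖ ≤ M) (hB : ∀ k : ℕ, k * τ ≤ T → x k ∈ B) {s t : ℝ} (hs : 0 ≤ s)
    (hst : s ≤ t) (htT : t ≤ T) :
    ‖stepInterp τ x t - stepInterp τ x s‖ ≤ (⌊t / τ⌋₊ * τ - ⌊s / τ⌋₊ * τ) * M := by
  obtain ⟨p, hp, hlen⟩ := exists_floor_div_eq_add hτ hst
  have hmem := forall_le_floor_div_mem hτ hB (hs.trans hst) htT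
  rw [stepInterp, stepInterp, hlen, hp]
  exact hx.norm_add_sub_le hτ.le fun i hi => hM _ (hmem _ (by lia))

theorem norm_stepInterp_sub_sq_le (hx : IsProjEuler F C τ x) (hτ : 0 < τ)
    (hL : LipschitzOnWith L F B) (hM : ∀ y ∈ B, ‖F y‖ ≤ M) {v : V} (hv : v ∈ C)
    (hD : ∀ y ∈ B, ‖v - y‖ ≤ D) (hB : ∀ k : ℕ, k * τ ≤ T → x k ∈ B) {s t : ℝ} (hs : 0 ≤ s)
    (hst : s ≤ t) (htT : t ≤ T) :
    ‖stepInterp τ x t - v‖ ^ 2 ≤ ‖stepInterp τ x s - v‖ ^ 2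
      + 2 * (⌊t / τ⌋₊ * τ - ⌊s / τ⌋₊ * τ) * ⟪F (stepInterp τ x s), v - stepInterp τ x s⟫
      + (L * D + M) * M * (⌊t / τ⌋₊ * τ - ⌊s / τ⌋₊ * τ) ^ 2 := by
  obtain ⟨p, hp, hlen⟩ := exists_floor_div_eq_add hτ hst
  have hmem := forall_le_floor_div_mem hτ hB (hs.trans hst) htT
  rw [stepInterp, stepInterp, hlen, hp]
  exact hx.norm_add_sub_sq_le hτ.le hL hM (fun i hi => hmem _ (by lia)) hv hD

end IsProjEuler

/-- Projected Euler schemes from a common initial value `u₀`, whose steps `τ n` tend to `0` and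
which eventually remain in a bounded set on each bounded time interval. -/
structure IsProjEulerFamily (F : V → V) (C : Set V) (u₀ : V) (τ : ℕ → ℝ) (x : ℕ → ℕ → V) :
    Prop where
  tendsto_step : Tendsto τ atTop (𝓝[>] 0)
  isProjEuler : ∀ n, IsProjEuler F C (τ n) (x n)
  zero : ∀ n, x n 0 = u₀
  eventually_mem : ∀ T : ℝ, ∃ B, Bornology.IsBounded B ∧
    ∀ᶠ n in atTop, ∀ k : ℕ, k * τ n ≤ T → x n k ∈ B

/-- Curves in `C` solving `u̇ ∈ -F u - N_C(u)`, with `N_C` the normal cone, in the derivative-free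
sense of an evolution variational inequality: `‖u - v‖² / 2` grows at most at the rate
`⟪F u, v - u⟫`, up to a quadratic error, for every `v ∈ C`. -/
structure IsEVICurve (F : V → V) (C : Set V) (u : ℝ → V) : Prop where
  mem : ∀ t, 0 ≤ t → u t ∈ C
  lipschitzOnWith : ∀ T, ∃ M : ℝ≥0, LipschitzOnWith M u (Icc 0 T)
  norm_sub_sq_le : ∀ T, ∀ v ∈ C, ∃ K, ∀ s t, 0 ≤ s → s ≤ t → t ≤ T →
    ‖u t - v‖ ^ 2 ≤ ‖u s - v‖ ^ 2 + 2 * (t - s) * ⟪F (u s), v - u s⟫ + K * (t - s) ^ 2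

namespace IsProjEulerFamily

variable {F : V → V} {C : Set V} {u₀ : V} {τ : ℕ → ℝ} {x : ℕ → ℕ → V} {u : ℝ → V}

theorem eventually_step_pos (hx : IsProjEulerFamily F C u₀ τ x) : ∀ᶠ n in atTop, 0 < τ n :=
  hx.tendsto_step.eventually self_mem_nhdsWithin

theorem cauchySeq_stepInterp (hx : IsProjEulerFamily F C u₀ τ x) (hF : LipschitzOnBounded F)
    (hτ : ∀ n m, n ≤ m → ∃ N : ℕ, τ n = N * τ m) {t : ℝ} (ht : 0 ≤ t) :
    CauchySeq fun n => stepInterp (τ n) (x n) t := by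
  obtain ⟨B, hB, hmem⟩ := hx.eventually_mem t
  obtain ⟨L, hL⟩ := hF B hB
  obtain ⟨M, hM⟩ := hF.exists_norm_le hB
  have hD (z) (hz : z ∈ B) (w) (hw : w ∈ B) : ‖z - w‖ ≤ Metric.diam B :=
    dist_eq_norm z w ▸ Metric.dist_le_diam_of_mem hB hz hw
  obtain ⟨n₀, hn₀⟩ := eventually_atTop.1 (hmem.and hx.eventually_step_pos)
  let b (σ : ℝ) : ℝ :=
    √(t * (2 * ((L * Metric.diam B + 2 * M) * M) * σ) * Real.exp (2 * L * t)) + M * σ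
  have hb : Tendsto (fun n => b (τ (n + n₀))) atTop (𝓝 0) := by
    have hb0 : b 0 = 0 := by simp [b]
    have hcont : Continuous b := by fun_prop
    exact (hb0 ▸ hcont.tendsto 0).comp <|
      (tendsto_add_atTop_iff_nat n₀).2 (tendsto_nhds_of_tendsto_nhdsWithin hx.tendsto_step)
  refine (cauchySeq_shift n₀).1 (cauchySeq_of_le_tendsto_0' _ (fun n m hnm => ?_) hb)
  obtain ⟨N, hN⟩ := hτ (n + n₀) (m + n₀) (by lia)
  obtain ⟨hxB, hpos⟩ := hn₀ (n + n₀) (by lia)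
  obtain ⟨hyB, hpos'⟩ := hn₀ (m + n₀) (by lia)
  have hxN := hx.isProjEuler (n + n₀)
  rw [hN] at hxB hpos hxN
  rw [dist_eq_norm, hN]
  exact hxN.norm_stepInterp_sub_le_of_refinement (by rintro rfl; simp at hpos)
    (hx.isProjEuler _) (by rw [hx.zero, hx.zero]) hpos' hL hM hD hxB hyB ht le_rfl

theorem tendsto_time_increment (hx : IsProjEulerFamily F C u₀ τ x) {s t : ℝ} (hs : 0 ≤ s)
    (ht : 0 ≤ t) :
    Tendsto (fun n => ⌊t / τ n⌋₊ * τ n - ⌊s / τ n⌋₊ * τ n) atTop (𝓝 (t - s)) :=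
  ((tendsto_floor_div_mul ht).comp hx.tendsto_step).sub
    ((tendsto_floor_div_mul hs).comp hx.tendsto_step)

theorem isEVICurve_of_tendsto (hx : IsProjEulerFamily F C u₀ τ x) (hF : LipschitzOnBounded F)
    (hC : IsClosed C)
    (hu : ∀ t, 0 ≤ t → Tendsto (fun n => stepInterp (τ n) (x n) t) atTop (𝓝 (u t))) :
    IsEVICurve F C u where
  mem t ht := hC.mem_of_tendsto (hu t ht) (.of_forall fun n => (hx.isProjEuler n).mem _)
  lipschitzOnWith T := by
    obtain ⟨B, hB, hmem⟩ := hx.eventually_mem T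
    obtain ⟨M, hM⟩ := hF.exists_norm_le hB
    refine ⟨M.toNNReal, .of_dist_le_mul fun s hs t ht => ?_⟩
    rw [dist_comm, dist_comm s, dist_eq_norm, Real.dist_eq]
    wlog hst : s ≤ t generalizing s t
    · rw [norm_sub_rev, abs_sub_comm]
      exact this t ht s hs (le_of_not_ge hst)
    have hbound : ‖u t - u s‖ ≤ (t - s) * M := by
      refine le_of_tendsto_of_tendsto ((hu t ht.1).sub (hu s hs.1)).norm
        ((hx.tendsto_time_increment hs.1 ht.1).mul_const M) ?_
      filter_upwards [hmem, hx.eventually_step_pos] with n hn hpos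
      exact (hx.isProjEuler n).norm_stepInterp_sub_stepInterp_le hpos hM hn hs.1 hst ht.2
    rw [abs_of_nonneg (sub_nonneg.2 hst), mul_comm]
    exact hbound.trans (mul_le_mul_of_nonneg_left (Real.le_coe_toNNReal M) (sub_nonneg.2 hst))
  norm_sub_sq_le T v hv := by
    obtain ⟨B, hB, hmem⟩ := hx.eventually_mem T
    obtain ⟨L, hL⟩ := hF B hB
    obtain ⟨M, hM⟩ := hF.exists_norm_le hB
    obtain ⟨D, hD⟩ := hB.subset_closedBall v
    have hvD (y) (hy : y ∈ B) : ‖v - y‖ ≤ D := by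
      rw [norm_sub_rev]
      exact mem_closedBall_iff_norm.1 (hD hy)
    refine ⟨(L * D + M) * M, fun s t hs hst htT => ?_⟩
    have ht := hs.trans hst
    have htime := hx.tendsto_time_increment hs ht
    have hinner : Tendsto (fun n => ⟪F (stepInterp (τ n) (x n) s), v - stepInterp (τ n) (x n) s⟫)
        atTop (𝓝 ⟪F (u s), v - u s⟫) :=
      ((hF.continuous.tendsto _).comp (hu s hs)).inner ((hu s hs).const_sub v)
    refine le_of_tendsto_of_tendsto (((hu t ht).sub_const v).norm.pow 2)
      (((((hu s hs).sub_const v).norm.pow 2).add ((htime.const_mul 2).mul hinner)).add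
        ((htime.pow 2).const_mul _)) ?_
    filter_upwards [hmem, hx.eventually_step_pos] with n hn hpos
    exact (hx.isProjEuler n).norm_stepInterp_sub_sq_le hpos hL hM hv hvD hn hs hst htT

end IsProjEulerFamily

theorem exists_isProjEulerFamily [CompleteSpace V] {E : V → ℝ} {E' : V → V}
    (hgrad : ∀ u, HasGradientAt E (E' u) u) (hbdd : BddBelow (range E))
    (hLip : LipschitzOnBounded E') {C : Set V} (hCcl : IsClosed C) (hCcv : Convex ℝ C) {u₀ : V}
    (hu₀ : u₀ ∈ C) {τ : ℕ → ℝ} (hτ : Tendsto τ atTop (𝓝[>] 0)) :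
    ∃ x, IsProjEulerFamily E' C u₀ τ x := by
  choose x hx hx0 using fun n => exists_isProjEuler E' hCcl hCcv (τ n) hu₀
  refine ⟨x, hτ, hx, hx0, fun T => ?_⟩
  obtain ⟨B, hB, hmem⟩ := exists_isBounded_isProjEuler_mem hgrad hbdd hLip C u₀ T
  exact ⟨B, hB, (hτ.eventually hmem).mono fun n hn => hn (x n) (hx n) (hx0 n)⟩

theorem exists_isEVICurve [CompleteSpace V] {E : V → ℝ} {E' : V → V}
    (hgrad : ∀ u, HasGradientAt E (E' u) u) (hbdd : BddBelow (range E))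
    (hLip : LipschitzOnBounded E') {C : Set V} (hCcl : IsClosed C) (hCcv : Convex ℝ C) {u₀ : V}
    (hu₀ : u₀ ∈ C) : ∃ u, IsEVICurve E' C u ∧ u 0 = u₀ := by
  let τ : ℕ → ℝ := fun n => 2⁻¹ ^ n
  have hτ : Tendsto τ atTop (𝓝[>] 0) := tendsto_nhdsWithin_iff.2
    ⟨tendsto_pow_atTop_nhds_zero_of_lt_one (by norm_num) (by norm_num),
      .of_forall fun n => mem_Ioi.2 (by positivity)⟩
  have hrefine (n m : ℕ) (hnm : n ≤ m) : ∃ N : ℕ, τ n = N * τ m := by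
    refine ⟨2 ^ (m - n), ?_⟩
    obtain ⟨p, rfl⟩ := Nat.exists_eq_add_of_le hnm
    simp only [τ, add_tsub_cancel_left, Nat.cast_pow, Nat.cast_ofNat, inv_pow, pow_add]
    field
  obtain ⟨x, hx⟩ := exists_isProjEulerFamily hgrad hbdd hLip hCcl hCcv hu₀ hτ
  choose! u hu using fun t (ht : 0 ≤ t) =>
    cauchySeq_tendsto_of_complete (hx.cauchySeq_stepInterp hLip hrefine ht)
  refine ⟨u, hx.isEVICurve_of_tendsto hLip hCcl hu, tendsto_nhds_unique (hu 0 le_rfl) ?_⟩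
  simp [stepInterp, hx.zero]

namespace IsEVICurve

variable {F : V → V} {C : Set V} {u : ℝ → V}

theorem inner_add_inner_nonneg (hu : IsEVICurve F C u) {t : ℝ} (ht : 0 ≤ t) {u' : V}
    (hderiv : HasDerivAt u u' t) {v : V} (hv : v ∈ C) :
    0 ≤ ⟪u', v - u t⟫ + ⟪F (u t), v - u t⟫ := by
  obtain ⟨K, hK⟩ := hu.norm_sub_sq_le (t + 1) v hv
  have hslope : Tendsto (fun h : ℝ => h⁻¹ • (‖u (t + h) - v‖ ^ 2 - ‖u t - v‖ ^ 2)) (𝓝[>] 0)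
      (𝓝 (2 * ⟪u t - v, u'⟫)) :=
    (hderiv.sub_const v).norm_sq.tendsto_slope_zero_right
  have hbound : Tendsto (fun h : ℝ => 2 * ⟪F (u t), v - u t⟫ + K * h) (𝓝[>] 0)
      (𝓝 (2 * ⟪F (u t), v - u t⟫)) := by
    have hcont : Continuous fun h : ℝ => 2 * ⟪F (u t), v - u t⟫ + K * h := by fun_prop
    simpa using tendsto_nhdsWithin_of_tendsto_nhds (hcont.tendsto 0)
  have hle : 2 * ⟪u t - v, u'⟫ ≤ 2 * ⟪F (u t), v - u t⟫ := by
    refine le_of_tendsto_of_tendsto hslope hbound ?_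
    filter_upwards [Ioc_mem_nhdsGT one_pos] with h ⟨hpos, hle⟩
    rw [smul_eq_mul, inv_mul_le_iff₀ hpos]
    linarith [hK t (t + h) ht (by linarith) (by linarith)]
  rw [← neg_sub v, inner_neg_left, real_inner_comm] at hle
  linarith

theorem ae_differentiableAt [CompleteSpace V] (hu : IsEVICurve F C u) :
    ∀ᵐ t ∂volume.restrict (Ioi (0 : ℝ)), DifferentiableAt ℝ u t := by
  rw [ae_restrict_iff' measurableSet_Ioi]
  have hall : ∀ᵐ t : ℝ, ∀ n : ℕ, t ∈ Ioo (0 : ℝ) n → DifferentiableAt ℝ u t :=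
    ae_all_iff.2 fun n => ae_differentiableAt_of_lipschitzOnWith (hu.lipschitzOnWith n).choose_spec
  filter_upwards [hall] with t ht hpos
  obtain ⟨n, hn⟩ := exists_nat_gt t
  exact ht n ⟨hpos, hn⟩

theorem isOGF [CompleteSpace V] (hu : IsEVICurve F C u) : IsOGF C F u (deriv u) (u 0) where
  init := rfl
  mem := hu.mem
  derivAe := hu.ae_differentiableAt.mono fun _ ht => ht.hasDerivAt
  sqInt T _ := integrableOn_norm_deriv_sq_of_lipschitzOnWith (hu.lipschitzOnWith T).choose_spec
  ftc s t hs hst := (integral_deriv_eq_sub_of_lipschitzOnWith hst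
    ((hu.lipschitzOnWith t).choose_spec.mono (Icc_subset_Icc_left hs))).symm
  fvi := by
    filter_upwards [hu.ae_differentiableAt, ae_restrict_mem measurableSet_Ioi] with t ht hpos v hv
    exact hu.inner_add_inner_nonneg (le_of_lt hpos) ht.hasDerivAt hv

end IsEVICurve

end Hilbert

theorem Assumption2.lipschitzOnBounded {W : Type*} [NormedAddCommGroup W] {F : W → W} {ζ : ℝ → ℝ}
    (hF : Assumption2 F ζ) : LipschitzOnBounded F := by
  intro B hB
  obtain ⟨R, hR⟩ := isBounded_iff_forall_norm_le.1 hB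
  refine ⟨(ζ (2 * max R 0)).toNNReal, .of_dist_le_mul fun y hy z hz => ?_⟩
  rw [dist_eq_norm, dist_eq_norm]
  refine (hF.bound y z).trans (mul_le_mul_of_nonneg_right ?_ (norm_nonneg _))
  refine (hF.mono (mem_Ici.2 (by positivity)) (mem_Ici.2 (by positivity)) ?_).trans
    (Real.le_coe_toNNReal _)
  linarith [hR y hy, hR z hz, le_max_left R 0]

theorem closure_preconditioned_subset {W : Type*} [NormedAddCommGroup W] (E : W → ℝ) {C : Set W}
    (hC : IsClosed C) : closure (preconditioned E C) ⊆ C :=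
  closure_minimal (fun _ hw => hw.1) hC

theorem existence_from_preconditioned_general {E : H → ℝ} {E' : H → H}
    (hgrad : ∀ u, HasGradientAt E (E' u) u) (hbdd : BddBelow (range E))
    (hLip : LipschitzOnBounded E') {C : Set H} (hCcl : IsClosed C) (hCcv : Convex ℝ C) {u₀ : H}
    (hu₀ : u₀ ∈ C) : ∃ u u' : ℝ → H, IsOGF C E' u u' u₀ := by
  obtain ⟨u, hu, rfl⟩ := exists_isEVICurve hgrad hbdd hLip hCcl hCcv hu₀
  exact ⟨u, deriv u, hu.isOGF⟩

/-- **Existence result.** For every `u₀` in the closure of the set `P` of preconditioned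
initial values there exists an Obstacle Gradient Flow starting at `u₀`. -/
theorem existence_from_preconditioned
    (E : H → ℝ) (E' : H → H) (α : ℝ) (hE : Assumption1 E E' α)
    (ζ : ℝ → ℝ) (hζ : Assumption2 E' ζ)
    (C : Set H) (hCne : C.Nonempty) (hCcl : IsClosed C) (hCcv : Convex ℝ C)
    (u₀ : H) (hu₀ : u₀ ∈ closure (preconditioned E C)) :
    ∃ u u' : ℝ → H, IsOGF C E' u u' u₀ :=
  existence_from_preconditioned_general hE.grad ⟨α, forall_mem_range.2 hE.lowerBound⟩
    hζ.lipschitzOnBounded hCcl hCcv (closure_preconditioned_subset E hCcl hu₀)
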